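/- Let β > 1/2, m > 0, and let X be a random variable distributed on ℝ₊ = (0,∞) with the inverse Gamma density h_{β,m}(x) = C_{β,m} x^{−2β} e^{−m/x}, where C_{β,m} > 0 is the normalizing constant. Then for every smooth function φ on ℝ₊ such that φ(X) has finite variance, Var[φ(X)] ≤ (1/ρ(β)) E[X² (φ'(X))²], where ρ(β) = (β − 1/2)² for 1/2 < β ≤ 3/2 and ρ(β) = 2(β − 1) for β > 3/2. -/

import Mathlib

open MeasureTheory Set
open Filter Topology

/-!
Put `ψ = φ - φ a`. If `u` is increasing with `u a = 0` and `q = p u'`, Picone's identity writes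
`p ψ'²` as the derivative of `q ψ² / u`, plus the square `p (ψ' - (u'/u) ψ)²`, minus `(q' / u) ψ²`.
When `q' / u ≤ -lam * f`, integrating over `[x, y] ∋ a` leaves `lam ∫ ψ² f ≤ ∫ p ψ'²`, because
`q ψ² / u` has the sign of `u`; and `∫ ψ² f` dominates the variance of `φ`.

For the inverse Gamma density `f` and `p = x² f`, one takes `u = x ^ γ - a ^ γ` with `0 < γ ≤ 1` and
`a = m / (2 β - 1 - γ)`, which gives `lam = γ (2 β - 1 - γ)`. This is largest at `γ = β - 1 / 2`, or
at `γ = 1` when `β - 1 / 2 > 1`.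
-/

section Exhaustion

variable {α : Type*} [LinearOrder α] [TopologicalSpace α] [OrderClosedTopology α]
  [LocallyCompactSpace α] [SecondCountableTopology α] [MeasurableSpace α] [OpensMeasurableSpace α]

lemma exists_aecover_Icc_of_isOpen (μ : Measure α) {s : Set α} (hs : IsOpen s) {a : α}
    (ha : a ∈ s) :
    ∃ x y : ℕ → α, (∀ n, x n ∈ s ∧ y n ∈ s ∧ a ∈ Icc (x n) (y n)) ∧
      AECover (μ.restrict s) atTop fun n => Icc (x n) (y n) := by
  have : LocallyCompactSpace s := hs.locallyCompactSpace
  let K := CompactExhaustion.choice s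
  let L : ℕ → Set α := fun n => insert a ((↑) '' K n)
  have hLs : ∀ n, L n ⊆ s := fun n => insert_subset ha (Subtype.coe_image_subset s (K n))
  have hL : ∀ n, IsCompact (L n) := fun n => ((K.isCompact n).image continuous_subtype_val).insert a
  choose x hx using fun n => (hL n).exists_isLeast (insert_nonempty _ _)
  choose y hy using fun n => (hL n).exists_isGreatest (insert_nonempty _ _)
  have hLxy : ∀ n, L n ⊆ Icc (x n) (y n) := fun n z hz => ⟨(hx n).2 hz, (hy n).2 hz⟩
  refine ⟨x, y, fun n => ⟨hLs n (hx n).1, hLs n (hy n).1, hLxy n (mem_insert _ _)⟩, ?_,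
    fun n => measurableSet_Icc⟩
  filter_upwards [ae_restrict_mem hs.measurableSet] with z hz
  obtain ⟨N, hN⟩ := K.exists_mem ⟨z, hz⟩
  filter_upwards [eventually_ge_atTop N] with n hn
  exact hLxy n (mem_insert_of_mem a ⟨⟨z, hz⟩, K.subset hn hN, rfl⟩)

end Exhaustion

section WeightedVariance

variable {α : Type*} [MeasurableSpace α] {μ : Measure α} {f φ : α → ℝ}

lemma integrable_mul_of_integrable_sq_mul (hf : Integrable f μ) (hf0 : 0 ≤ᵐ[μ] f)
    (hφ : AEStronglyMeasurable φ μ) (h : Integrable (fun x => φ x ^ 2 * f x) μ) :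
    Integrable (fun x => φ x * f x) μ := by
  refine (hf.add h).mono' (hφ.mul hf.aestronglyMeasurable) ?_
  filter_upwards [hf0] with x hx
  have abs_le : |φ x| ≤ 1 + φ x ^ 2 := by
    rw [← sq_abs (φ x)]; nlinarith [sq_nonneg (|φ x| - 1), abs_nonneg (φ x)]
  calc ‖φ x * f x‖ = |φ x| * f x := by rw [Real.norm_eq_abs, abs_mul, abs_of_nonneg hx]
    _ ≤ (1 + φ x ^ 2) * f x := mul_le_mul_of_nonneg_right abs_le hx
    _ = f x + φ x ^ 2 * f x := by ring

lemma variance_le_integral_sub_sq_mul (hf0 : 0 ≤ᵐ[μ] f) (hf1 : ∫ x, f x ∂μ = 1)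
    (hφ : AEStronglyMeasurable φ μ) (c : ℝ) (h : Integrable (fun x => (φ x - c) ^ 2 * f x) μ) :
    Integrable (fun x => φ x ^ 2 * f x) μ ∧
      ∫ x, φ x ^ 2 * f x ∂μ - (∫ x, φ x * f x ∂μ) ^ 2 ≤ ∫ x, (φ x - c) ^ 2 * f x ∂μ := by
  have hf : Integrable f μ := .of_integral_ne_zero (hf1 ▸ one_ne_zero)
  have h1 : Integrable (fun x => (φ x - c) * f x) μ :=
    integrable_mul_of_integrable_sq_mul hf hf0 (hφ.sub aestronglyMeasurable_const) h
  have mul_eq : (fun x => φ x * f x) = fun x => (φ x - c) * f x + c * f x := by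
    funext x; ring
  have sq_mul_eq : (fun x => φ x ^ 2 * f x) =
      fun x => (φ x - c) ^ 2 * f x + (2 * c * ((φ x - c) * f x) + c ^ 2 * f x) := by
    funext x; ring
  have hcross : Integrable (fun x => 2 * c * ((φ x - c) * f x) + c ^ 2 * f x) μ :=
    (h1.const_mul (2 * c)).add (hf.const_mul (c ^ 2))
  refine ⟨sq_mul_eq ▸ h.add hcross, ?_⟩
  rw [sq_mul_eq, mul_eq, integral_add h hcross,
    integral_add (h1.const_mul (2 * c)) (hf.const_mul (c ^ 2)),
    integral_add h1 (hf.const_mul c), integral_const_mul, integral_const_mul, integral_const_mul,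
    hf1]
  nlinarith [sq_nonneg (∫ x, (φ x - c) * f x ∂μ)]

end WeightedVariance

/-- The vector field `p u' ψ² / u` of Picone's identity. At a zero of `u` its value is `0`, by the
convention on division; this is its limit there when `ψ` vanishes too and `u'` does not. -/
noncomputable def piconeField (p u u' ψ : ℝ → ℝ) (x : ℝ) : ℝ := p x * u' x * ψ x ^ 2 / u x

section Picone

variable {p u u' ψ : ℝ → ℝ} {q v a x : ℝ}

lemma hasDerivAt_piconeField (hu : HasDerivAt u (u' x) x)
    (hq : HasDerivAt (fun y => p y * u' y) q x) (hψ : HasDerivAt ψ v x) (hx : u x ≠ 0) :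
    HasDerivAt (piconeField p u u' ψ)
      (p x * v ^ 2 - p x * (v - u' x / u x * ψ x) ^ 2 + q / u x * ψ x ^ 2) x := by
  refine ((hq.mul (hψ.pow 2)).div hu hx).congr_deriv ?_
  simp only [Pi.mul_apply, Pi.pow_apply]
  field_simp
  ring

lemma continuousAt_piconeField_of_eq_zero (hu : HasDerivAt u (u' a) a) (hu' : u' a ≠ 0)
    (hq : ContinuousAt (fun y => p y * u' y) a) (hψ : HasDerivAt ψ v a) (hua : u a = 0)
    (hψa : ψ a = 0) : ContinuousAt (piconeField p u u' ψ) a := by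
  have tendsto_ratio : Tendsto (fun y => slope ψ a y / slope u a y) (𝓝[≠] a) (𝓝 (v / u' a)) :=
    hψ.tendsto_slope.div hu.tendsto_slope hu'
  have tendsto_prod := ((hq.mul hψ.continuousAt).tendsto.mono_left nhdsWithin_le_nhds).mul
    tendsto_ratio
  rw [continuousAt_iff_punctured_nhds]
  convert tendsto_prod.congr' ?_ using 2
  · simp [piconeField, hψa]
  · filter_upwards [self_mem_nhdsWithin] with y hy
    have hya : y - a ≠ 0 := sub_ne_zero.2 hy
    simp only [piconeField, slope_def_field, hψa, hua, sub_zero, Pi.mul_apply]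
    rw [div_div_div_cancel_right₀ hya]
    ring

end Picone

/-- `u` is an increasing function on `s`, with derivative `u'` and zero `a`, whose flux `p u'` has
derivative `q'` with `q' ≤ -lam * f * u` where `u > 0` and `q' ≥ -lam * f * u` where `u < 0`. Both
inequalities are encoded by `flux_deriv_mul_le`. With equality, `u` is an eigenfunction of the
Sturm–Liouville operator `-f⁻¹ (d/dx) p (d/dx)`, with eigenvalue `lam`. -/
structure IsSturmLiouvilleSupersolution (s : Set ℝ) (p f : ℝ → ℝ) (lam : ℝ) (u u' q' : ℝ → ℝ)
    (a : ℝ) : Prop where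
  hasDerivAt : ∀ x ∈ s, HasDerivAt u (u' x) x
  deriv_pos : ∀ x ∈ s, 0 < u' x
  eq_zero : u a = 0
  hasDerivAt_flux : ∀ x ∈ s, HasDerivAt (fun y => p y * u' y) (q' x) x
  flux_deriv_mul_le : ∀ x ∈ s, q' x * u x ≤ -(lam * f x * u x ^ 2)

namespace IsSturmLiouvilleSupersolution

variable {s : Set ℝ} {p f u u' q' ψ ψ' φ φ' : ℝ → ℝ} {lam a x y : ℝ}

lemma strictMonoOn [OrdConnected s] (hu : IsSturmLiouvilleSupersolution s p f lam u u' q' a) :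
    StrictMonoOn u s :=
  strictMonoOn_of_deriv_pos (convex_iff_ordConnected.2 ‹_›)
    (fun x hx => (hu.hasDerivAt x hx).continuousAt.continuousWithinAt) fun x hx => by
      rw [(hu.hasDerivAt x (interior_subset hx)).deriv]
      exact hu.deriv_pos x (interior_subset hx)

lemma ne_zero [OrdConnected s] (hu : IsSturmLiouvilleSupersolution s p f lam u u' q' a)
    (ha : a ∈ s) (hx : x ∈ s) (hxa : x ≠ a) : u x ≠ 0 :=
  hu.eq_zero ▸ hu.strictMonoOn.injOn.ne hx ha hxa

lemma flux_deriv_div_le (hu : IsSturmLiouvilleSupersolution s p f lam u u' q' a) (hx : x ∈ s)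
    (hux : u x ≠ 0) : q' x / u x ≤ -(lam * f x) := by
  calc q' x / u x = q' x * u x / u x ^ 2 := by field_simp
    _ ≤ -(lam * f x * u x ^ 2) / u x ^ 2 := by gcongr; exact hu.flux_deriv_mul_le x hx
    _ = -(lam * f x) := by field_simp

lemma piconeField_nonneg [OrdConnected s] (hu : IsSturmLiouvilleSupersolution s p f lam u u' q' a)
    (hp : ∀ x ∈ s, 0 ≤ p x) (ha : a ∈ s) (hx : x ∈ s) (hax : a ≤ x) :
    0 ≤ piconeField p u u' ψ x :=
  div_nonneg (mul_nonneg (mul_nonneg (hp x hx) (hu.deriv_pos x hx).le) (sq_nonneg _))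
    (hu.eq_zero ▸ hu.strictMonoOn.monotoneOn ha hx hax)

lemma piconeField_nonpos [OrdConnected s] (hu : IsSturmLiouvilleSupersolution s p f lam u u' q' a)
    (hp : ∀ x ∈ s, 0 ≤ p x) (ha : a ∈ s) (hx : x ∈ s) (hxa : x ≤ a) :
    piconeField p u u' ψ x ≤ 0 :=
  div_nonpos_of_nonneg_of_nonpos
    (mul_nonneg (mul_nonneg (hp x hx) (hu.deriv_pos x hx).le) (sq_nonneg _))
    (hu.eq_zero ▸ hu.strictMonoOn.monotoneOn hx ha hxa)

lemma continuousOn_piconeField [OrdConnected s]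
    (hu : IsSturmLiouvilleSupersolution s p f lam u u' q' a) (ha : a ∈ s)
    (hψ : ∀ x ∈ s, HasDerivAt ψ (ψ' x) x) (hψa : ψ a = 0) :
    ContinuousOn (piconeField p u u' ψ) s := by
  intro x hx
  refine ContinuousAt.continuousWithinAt ?_
  obtain rfl | hxa := eq_or_ne x a
  · exact continuousAt_piconeField_of_eq_zero (hu.hasDerivAt x hx) (hu.deriv_pos x hx).ne'
      (hu.hasDerivAt_flux x hx).continuousAt (hψ x hx) hu.eq_zero hψa
  · exact (hasDerivAt_piconeField (hu.hasDerivAt x hx) (hu.hasDerivAt_flux x hx) (hψ x hx)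
      (hu.ne_zero ha hx hxa)).continuousAt

lemma piconeField_sub_le_integral [OrdConnected s]
    (hu : IsSturmLiouvilleSupersolution s p f lam u u' q' a) (hp : ∀ x ∈ s, 0 ≤ p x) (ha : a ∈ s)
    (hψ : ∀ x ∈ s, HasDerivAt ψ (ψ' x) x) (hψa : ψ a = 0) (hxy : x ≤ y) (hs : Icc x y ⊆ s)
    (hxya : a ∉ Ioo x y)
    (hint : IntegrableOn (fun z => p z * ψ' z ^ 2 - lam * (ψ z ^ 2 * f z)) (Icc x y)) :
    piconeField p u u' ψ y - piconeField p u u' ψ x ≤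
      ∫ z in x..y, (p z * ψ' z ^ 2 - lam * (ψ z ^ 2 * f z)) := by
  have mem_of_Ioo : ∀ z ∈ Ioo x y, z ∈ s := fun z hz => hs (Ioo_subset_Icc_self hz)
  have ne_zero_of_Ioo : ∀ z ∈ Ioo x y, u z ≠ 0 := fun z hz =>
    hu.ne_zero ha (mem_of_Ioo z hz) (ne_of_mem_of_not_mem hz hxya)
  refine intervalIntegral.sub_le_integral_of_hasDeriv_right_of_le hxy
    ((hu.continuousOn_piconeField ha hψ hψa).mono hs)
    (fun z hz => (hasDerivAt_piconeField (hu.hasDerivAt z (mem_of_Ioo z hz))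
      (hu.hasDerivAt_flux z (mem_of_Ioo z hz)) (hψ z (mem_of_Ioo z hz))
      (ne_zero_of_Ioo z hz)).hasDerivWithinAt) hint fun z hz => ?_
  have square_nonneg : 0 ≤ p z * (ψ' z - u' z / u z * ψ z) ^ 2 :=
    mul_nonneg (hp z (mem_of_Ioo z hz)) (sq_nonneg _)
  have flux_le : q' z / u z * ψ z ^ 2 ≤ -(lam * f z) * ψ z ^ 2 :=
    mul_le_mul_of_nonneg_right (hu.flux_deriv_div_le (mem_of_Ioo z hz) (ne_zero_of_Ioo z hz))
      (sq_nonneg _)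
  linarith

lemma mul_setIntegral_Icc_le [OrdConnected s]
    (hu : IsSturmLiouvilleSupersolution s p f lam u u' q' a) (hp : ∀ x ∈ s, 0 ≤ p x)
    (hψ : ∀ x ∈ s, HasDerivAt ψ (ψ' x) x) (hψa : ψ a = 0) (hx : x ∈ s) (hy : y ∈ s)
    (ha : a ∈ Icc x y) (hf : IntegrableOn (fun z => ψ z ^ 2 * f z) (Icc x y))
    (hint : IntegrableOn (fun z => p z * ψ' z ^ 2) (Icc x y)) :
    lam * ∫ z in Icc x y, ψ z ^ 2 * f z ≤ ∫ z in Icc x y, p z * ψ' z ^ 2 := by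
  have hs : Icc x y ⊆ s := Set.Icc_subset s hx hy
  have has : a ∈ s := hs ha
  have hxa : Icc x a ⊆ Icc x y := Icc_subset_Icc_right ha.2
  have hay : Icc a y ⊆ Icc x y := Icc_subset_Icc_left ha.1
  have hD := hint.sub (hf.const_mul lam)
  have left := hu.piconeField_sub_le_integral hp has hψ hψa ha.1 (hxa.trans hs)
    right_notMem_Ioo (hD.mono_set hxa)
  have right := hu.piconeField_sub_le_integral hp has hψ hψa ha.2 (hay.trans hs)
    left_notMem_Ioo (hD.mono_set hay)
  have total := intervalIntegral.integral_add_adjacent_intervals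
    ((intervalIntegrable_iff_integrableOn_Icc_of_le ha.1).2 (hD.mono_set hxa))
    ((intervalIntegrable_iff_integrableOn_Icc_of_le ha.2).2 (hD.mono_set hay))
  have boundary_left := hu.piconeField_nonpos (ψ := ψ) hp has hx ha.1
  have boundary_right := hu.piconeField_nonneg (ψ := ψ) hp has hy ha.2
  have integral_nonneg : 0 ≤ ∫ z in Icc x y, (p z * ψ' z ^ 2 - lam * (ψ z ^ 2 * f z)) := by
    rw [integral_Icc_eq_integral_Ioc, ← intervalIntegral.integral_of_le (ha.1.trans ha.2)]
    simp only [Pi.sub_apply] at total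
    linarith
  rwa [integral_sub hint (hf.const_mul lam), integral_const_mul, sub_nonneg] at integral_nonneg

theorem mul_setIntegral_le [OrdConnected s]
    (hu : IsSturmLiouvilleSupersolution s p f lam u u' q' a) (hs : IsOpen s) (ha : a ∈ s)
    (hlam : 0 < lam) (hp : ∀ x ∈ s, 0 ≤ p x) (hf : ContinuousOn f s) (hf0 : ∀ x ∈ s, 0 ≤ f x)
    (hψ : ∀ x ∈ s, HasDerivAt ψ (ψ' x) x) (hψa : ψ a = 0)
    (hint : IntegrableOn (fun x => p x * ψ' x ^ 2) s) :
    IntegrableOn (fun x => ψ x ^ 2 * f x) s ∧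
      lam * ∫ x in s, ψ x ^ 2 * f x ≤ ∫ x in s, p x * ψ' x ^ 2 := by
  obtain ⟨x, y, hxy, hcover⟩ := exists_aecover_Icc_of_isOpen volume hs ha
  have hsub : ∀ n, Icc (x n) (y n) ⊆ s := fun n => Set.Icc_subset s (hxy n).1 (hxy n).2.1
  have restrict_eq : ∀ n, (volume.restrict s).restrict (Icc (x n) (y n)) =
      volume.restrict (Icc (x n) (y n)) := fun n => Measure.restrict_restrict_of_subset (hsub n)
  have hcont : ContinuousOn (fun x => ψ x ^ 2 * f x) s :=
    ((HasDerivAt.continuousOn hψ).pow 2).mul hf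
  have hfn : ∀ n, IntegrableOn (fun x => ψ x ^ 2 * f x) (Icc (x n) (y n)) := fun n =>
    (hcont.mono (hsub n)).integrableOn_compact isCompact_Icc
  have bound : ∀ n, ∫ z in Icc (x n) (y n), ψ z ^ 2 * f z ∂volume.restrict s ≤
      (∫ z in s, p z * ψ' z ^ 2) / lam := fun n => by
    rw [restrict_eq, le_div_iff₀' hlam]
    refine (hu.mul_setIntegral_Icc_le hp hψ hψa (hxy n).1 (hxy n).2.1 (hxy n).2.2 (hfn n)
      (hint.mono_set (hsub n))).trans (setIntegral_mono_set hint ?_ (hsub n).eventuallyLE)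
    filter_upwards [ae_restrict_mem hs.measurableSet] with z hz
    exact mul_nonneg (hp z hz) (sq_nonneg _)
  have hfs : IntegrableOn (fun x => ψ x ^ 2 * f x) s := by
    refine hcover.integrable_of_integral_bounded_of_nonneg_ae _
      (fun n => (hfn n).mono_measure Measure.restrict_le_self) ?_ (.of_forall bound)
    filter_upwards [ae_restrict_mem hs.measurableSet] with z hz
    exact mul_nonneg (sq_nonneg _) (hf0 z hz)
  exact ⟨hfs, (le_div_iff₀' hlam).1 <|
    le_of_tendsto' (hcover.integral_tendsto_of_countably_generated hfs) bound⟩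

theorem variance_le [OrdConnected s] (hu : IsSturmLiouvilleSupersolution s p f lam u u' q' a)
    (hs : IsOpen s) (ha : a ∈ s) (hlam : 0 < lam) (hp : ∀ x ∈ s, 0 ≤ p x) (hf : ContinuousOn f s)
    (hf0 : ∀ x ∈ s, 0 ≤ f x) (hf1 : ∫ x in s, f x = 1) (hφ : ∀ x ∈ s, HasDerivAt φ (φ' x) x)
    (hint : IntegrableOn (fun x => p x * φ' x ^ 2) s) :
    IntegrableOn (fun x => φ x ^ 2 * f x) s ∧
      (∫ x in s, φ x ^ 2 * f x) - (∫ x in s, φ x * f x) ^ 2 ≤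
        1 / lam * ∫ x in s, p x * φ' x ^ 2 := by
  obtain ⟨hcentred, hle⟩ := hu.mul_setIntegral_le (ψ := fun x => φ x - φ a) hs ha hlam hp hf hf0
    (fun x hx => (hφ x hx).sub_const (φ a)) (sub_self _) hint
  have hφm : AEStronglyMeasurable φ (volume.restrict s) :=
    (HasDerivAt.continuousOn hφ).aestronglyMeasurable hs.measurableSet
  obtain ⟨hsq, hvar⟩ := variance_le_integral_sub_sq_mul
    (ae_restrict_of_forall_mem hs.measurableSet hf0) hf1 hφm (φ a) hcentred
  refine ⟨hsq, hvar.trans ?_⟩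
  rwa [one_div, ← div_eq_inv_mul, le_div_iff₀' hlam]

end IsSturmLiouvilleSupersolution

/-- The inverse Gamma density `h_{β,m}`, with the normalizing constant `C` as a free parameter. -/
noncomputable def inverseGammaDensity (β m C x : ℝ) : ℝ :=
  C * x ^ (-(2 * β)) * Real.exp (-m / x)

section InverseGamma

variable {β m C γ a x : ℝ} {φ : ℝ → ℝ}

lemma inverseGammaDensity_nonneg (hC : 0 ≤ C) (hx : 0 ≤ x) : 0 ≤ inverseGammaDensity β m C x :=
  mul_nonneg (mul_nonneg hC (Real.rpow_nonneg hx _)) (Real.exp_nonneg _)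

lemma hasDerivAt_inverseGammaDensity (hx : x ≠ 0) :
    HasDerivAt (inverseGammaDensity β m C)
      (inverseGammaDensity β m C x * (m / x ^ 2 - 2 * β / x)) x := by
  have hpow : HasDerivAt (fun y : ℝ => y ^ (-(2 * β))) (-(2 * β) * x ^ (-(2 * β) - 1)) x :=
    Real.hasDerivAt_rpow_const (Or.inl hx)
  have hinv : HasDerivAt (fun y : ℝ => -m / y) (m / x ^ 2) x := by
    simpa [div_eq_mul_inv] using (hasDerivAt_inv hx).const_mul (-m)
  refine ((hpow.const_mul C).mul hinv.exp).congr_deriv ?_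
  rw [inverseGammaDensity, Real.rpow_sub_one hx]
  field_simp
  ring

lemma hasDerivAt_sq_mul_inverseGammaDensity_mul_rpow (hx : x ≠ 0) :
    HasDerivAt (fun y => y ^ 2 * inverseGammaDensity β m C y * (γ * y ^ (γ - 1)))
      (γ * inverseGammaDensity β m C x * x ^ (γ - 1) * (m - (2 * β - 1 - γ) * x)) x := by
  have hpow : HasDerivAt (fun y : ℝ => y ^ (γ - 1)) ((γ - 1) * x ^ (γ - 1 - 1)) x :=
    Real.hasDerivAt_rpow_const (Or.inl hx)
  refine (((hasDerivAt_pow 2 x).mul (hasDerivAt_inverseGammaDensity hx)).mul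
    (hpow.const_mul γ)).congr_deriv ?_
  rw [Real.rpow_sub_one hx (γ - 1)]
  simp only [Pi.mul_apply]
  field_simp
  push_cast
  ring

lemma rpow_sub_one_mul_sub_mul_rpow_sub_le (hx : 0 < x) (ha : 0 < a) (hγ : 0 ≤ γ) (hγ1 : γ ≤ 1) :
    x ^ (γ - 1) * (a - x) * (x ^ γ - a ^ γ) ≤ -(x ^ γ - a ^ γ) ^ 2 := by
  have antivary : (x ^ (γ - 1) - a ^ (γ - 1)) * (x ^ γ - a ^ γ) ≤ 0 := by
    rcases le_total x a with h | h
    · exact mul_nonpos_of_nonneg_of_nonpos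
        (sub_nonneg.2 (Real.rpow_le_rpow_of_nonpos hx h (sub_nonpos.2 hγ1)))
        (sub_nonpos.2 (Real.rpow_le_rpow hx.le h hγ))
    · exact mul_nonpos_of_nonpos_of_nonneg
        (sub_nonpos.2 (Real.rpow_le_rpow_of_nonpos ha h (sub_nonpos.2 hγ1)))
        (sub_nonneg.2 (Real.rpow_le_rpow ha.le h hγ))
  have split_eq : x ^ (γ - 1) * (a - x) = a * (x ^ (γ - 1) - a ^ (γ - 1)) - (x ^ γ - a ^ γ) := by
    rw [Real.rpow_sub_one hx.ne', Real.rpow_sub_one ha.ne']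
    field_simp
    ring
  rw [split_eq]
  linarith [mul_nonpos_of_nonneg_of_nonpos ha.le antivary]

lemma isSturmLiouvilleSupersolution_rpow_sub (hC : 0 ≤ C) (hm : 0 < m) (hγ : 0 < γ) (hγ1 : γ ≤ 1)
    (hγβ : γ < 2 * β - 1) :
    IsSturmLiouvilleSupersolution (Ioi 0) (fun x => x ^ 2 * inverseGammaDensity β m C x)
      (inverseGammaDensity β m C) (γ * (2 * β - 1 - γ))
      (fun x => x ^ γ - (m / (2 * β - 1 - γ)) ^ γ) (fun x => γ * x ^ (γ - 1))
      (fun x => γ * inverseGammaDensity β m C x * x ^ (γ - 1) * (m - (2 * β - 1 - γ) * x))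
      (m / (2 * β - 1 - γ)) where
  hasDerivAt x hx := (Real.hasDerivAt_rpow_const (Or.inl (ne_of_gt hx))).sub_const _
  deriv_pos x hx := mul_pos hγ (Real.rpow_pos_of_pos hx _)
  eq_zero := sub_self _
  hasDerivAt_flux x hx := hasDerivAt_sq_mul_inverseGammaDensity_mul_rpow (ne_of_gt hx)
  flux_deriv_mul_le x hx := by
    have hδ : 0 < 2 * β - 1 - γ := sub_pos.2 hγβ
    set δ := 2 * β - 1 - γ
    set a := m / δ with ha
    have hm_eq : m = δ * a := by rw [ha]; field_simp
    have hcoeff : 0 ≤ γ * δ * inverseGammaDensity β m C x :=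
      mul_nonneg (mul_pos hγ hδ).le (inverseGammaDensity_nonneg hC (le_of_lt hx))
    calc γ * inverseGammaDensity β m C x * x ^ (γ - 1) * (m - δ * x) * (x ^ γ - a ^ γ)
        = γ * δ * inverseGammaDensity β m C x * (x ^ (γ - 1) * (a - x) * (x ^ γ - a ^ γ)) := by
          nth_rw 2 [hm_eq]; ring
      _ ≤ γ * δ * inverseGammaDensity β m C x * -(x ^ γ - a ^ γ) ^ 2 :=
          mul_le_mul_of_nonneg_left
            (rpow_sub_one_mul_sub_mul_rpow_sub_le hx (div_pos hm hδ) hγ.le hγ1) hcoeff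
      _ = -(γ * δ * inverseGammaDensity β m C x * (x ^ γ - a ^ γ) ^ 2) := by ring

theorem variance_inverseGammaDensity_le (hC : 0 ≤ C) (hm : 0 < m) (hγ : 0 < γ) (hγ1 : γ ≤ 1)
    (hγβ : γ < 2 * β - 1) (hnorm : ∫ x in Ioi (0 : ℝ), inverseGammaDensity β m C x = 1)
    (hφ : DifferentiableOn ℝ φ (Ioi 0))
    (hrhs : IntegrableOn (fun x => x ^ 2 * deriv φ x ^ 2 * inverseGammaDensity β m C x) (Ioi 0)) :
    IntegrableOn (fun x => φ x ^ 2 * inverseGammaDensity β m C x) (Ioi 0) ∧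
      (∫ x in Ioi (0 : ℝ), φ x ^ 2 * inverseGammaDensity β m C x)
          - (∫ x in Ioi (0 : ℝ), φ x * inverseGammaDensity β m C x) ^ 2
        ≤ 1 / (γ * (2 * β - 1 - γ)) *
          ∫ x in Ioi (0 : ℝ), x ^ 2 * deriv φ x ^ 2 * inverseGammaDensity β m C x := by
  have hδ : 0 < 2 * β - 1 - γ := sub_pos.2 hγβ
  have hnonneg : ∀ x ∈ Ioi (0 : ℝ), 0 ≤ inverseGammaDensity β m C x := fun x hx =>
    inverseGammaDensity_nonneg hC (le_of_lt hx)
  simp only [mul_right_comm (_ ^ 2) (deriv φ _ ^ 2)] at hrhs ⊢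
  exact (isSturmLiouvilleSupersolution_rpow_sub hC hm hγ hγ1 hγβ).variance_le isOpen_Ioi
    (div_pos hm hδ) (mul_pos hγ hδ) (fun x hx => mul_nonneg (sq_nonneg x) (hnonneg x hx))
    (HasDerivAt.continuousOn fun x hx => hasDerivAt_inverseGammaDensity (ne_of_gt hx)) hnonneg
    hnorm (fun x hx => (hφ.differentiableAt (Ioi_mem_nhds hx)).hasDerivAt) hrhs

end InverseGamma

theorem chernoff_inverse_gamma_general
    (β m : ℝ) (hβ : 1 / 2 < β) (hm : 0 < m)
    (C : ℝ) (hC : 0 < C)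
    (hnorm : ∫ x in Ioi (0 : ℝ), C * x ^ (-(2 * β)) * Real.exp (-m / x) = 1)
    (φ : ℝ → ℝ) (hφ : DifferentiableOn ℝ φ (Ioi 0))
    (hrhs : IntegrableOn
      (fun x => x ^ 2 * (deriv φ x) ^ 2 * (C * x ^ (-(2 * β)) * Real.exp (-m / x))) (Ioi 0)) :
    IntegrableOn (fun x => φ x ^ 2 * (C * x ^ (-(2 * β)) * Real.exp (-m / x))) (Ioi 0) ∧
      (∫ x in Ioi (0 : ℝ), φ x ^ 2 * (C * x ^ (-(2 * β)) * Real.exp (-m / x)))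
          - (∫ x in Ioi (0 : ℝ), φ x * (C * x ^ (-(2 * β)) * Real.exp (-m / x))) ^ 2
        ≤ (1 / (if β ≤ 3 / 2 then (β - 1 / 2) ^ 2 else 2 * (β - 1))) *
            ∫ x in Ioi (0 : ℝ), x ^ 2 * (deriv φ x) ^ 2 *
              (C * x ^ (-(2 * β)) * Real.exp (-m / x)) := by
  split_ifs with h
  · rw [show (β - 1 / 2) ^ 2 = (β - 1 / 2) * (2 * β - 1 - (β - 1 / 2)) by ring]
    exact variance_inverseGammaDensity_le hC.le hm (by linarith) (by linarith) (by linarith) hnorm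
      hφ hrhs
  · rw [show 2 * (β - 1) = 1 * (2 * β - 1 - 1) by ring]
    exact variance_inverseGammaDensity_le hC.le hm one_pos le_rfl (by linarith) hnorm hφ hrhs

/-- **Chernoff inequality for inverse Gamma densities** (Theorem 2.3).
Let `β > 1/2`, `m > 0` and let `X` be a random variable on `ℝ₊ = (0,∞)` with the
inverse Gamma density `h_{β,m}(x) = C_{β,m} x^{−2β} e^{−m/x}` (`C_{β,m} > 0` the
normalizing constant). Then for every smooth `φ` on `ℝ₊` such that `φ(X)` has
finite variance, `Var[φ(X)] ≤ (1/ρ(β)) E[X² (φ'(X))²]`, where `ρ(β) = (β−1/2)²`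
for `1/2 < β ≤ 3/2` and `ρ(β) = 2(β−1)` for `β > 3/2`
(whenever the right-hand side is finite). -/
theorem chernoff_inverse_gamma
    (β m : ℝ) (hβ : 1 / 2 < β) (hm : 0 < m)
    (C : ℝ) (hC : 0 < C)
    (hnorm : ∫ x in Ioi (0 : ℝ), C * x ^ (-(2 * β)) * Real.exp (-m / x) = 1)
    (φ : ℝ → ℝ) (hφ : ContDiffOn ℝ (⊤ : ℕ∞) φ (Ioi 0))
    (hvar : IntegrableOn
      (fun x => φ x ^ 2 * (C * x ^ (-(2 * β)) * Real.exp (-m / x))) (Ioi 0))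
    (hrhs : IntegrableOn
      (fun x => x ^ 2 * (deriv φ x) ^ 2 * (C * x ^ (-(2 * β)) * Real.exp (-m / x))) (Ioi 0)) :
    (∫ x in Ioi (0 : ℝ), φ x ^ 2 * (C * x ^ (-(2 * β)) * Real.exp (-m / x)))
        - (∫ x in Ioi (0 : ℝ), φ x * (C * x ^ (-(2 * β)) * Real.exp (-m / x))) ^ 2
      ≤ (1 / (if β ≤ 3 / 2 then (β - 1 / 2) ^ 2 else 2 * (β - 1))) *
          ∫ x in Ioi (0 : ℝ), x ^ 2 * (deriv φ x) ^ 2 *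
            (C * x ^ (-(2 * β)) * Real.exp (-m / x)) := by
  exact (chernoff_inverse_gamma_general β m hβ hm C hC hnorm φ
    (hφ.differentiableOn (by simp)) hrhs).2
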